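/- Fix $d \in \mathbb{N}$ and constants $c_0, c_1, M > 0$. Let $m \in \mathbb{R}^d$ with $\|m\|_\infty \le M$, let $C$ be a symmetric positive definite $d \times d$ matrix such that all entries of $C$ and of $C^{-1}$ are bounded by $M$ in absolute value, and let $H : \mathbb{R}^d \to \mathbb{R}$ be measurable with $|H(x)| \le c_0 x^T x + c_1$ for all $x$. Let $\mathbb{E}$ denote expectation with respect to the Gaussian measure $\mathcal{N}(m, C)$ on $\mathbb{R}^d$, whose density is $(2\pi)^{-d/2} (\det C)^{-1/2} \exp\big(-\tfrac12 (x-m)^T C^{-1} (x-m)\big)$, and let $\lambda_{\min}$ denote the smallest eigenvalue of a symmetric matrix. (1) Let $\bar\varepsilon > 0$ with $\lambda_{\min}(C^{-1}) > 2 \bar\varepsilon c_0$, and let $\eta > 0$ be such that $\lambda_{\min}(C^{-1}) \ge 2 \bar\varepsilon c_0 + \eta$. Then there exists $K > 0$, depending only on $d, c_0, c_1, M, \bar\varepsilon, \eta$ (and not otherwise on $m$, $C$, $H$), such that for every $\varepsilon \in [0, \bar\varepsilon]$ the expectation $\mathbb{E}[e^{-\varepsilon H}]$ is finite and positive, and $|\log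 \mathbb{E}[e^{-\varepsilon H}]| \le K \varepsilon$. (2) There exist $\varepsilon_0 > 0$ and $K > 0$, depending only on $d, c_0, c_1, M$, such that, without any further condition on $C$, for every $\varepsilon \in [0, \varepsilon_0]$ the expectation $\mathbb{E}[e^{-\varepsilon H}]$ is finite and positive, and $|\log \mathbb{E}[e^{-\varepsilon H}]| \le K \varepsilon$. -/

import Mathlib

open MeasureTheory

noncomputable section

/-- The density `(2π)^{-d/2} (det C)^{-1/2} exp (-½ (x - m)ᵀ C⁻¹ (x - m))` of `N(m, C)`. -/
def gaussianDensity {d : ℕ} (m : Fin d → ℝ) (C : Matrix (Fin d) (Fin d) ℝ) (x : Fin d → ℝ) : ℝ :=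
  (2 * Real.pi) ^ (-(d : ℝ) / 2) * C.det ^ (-(1 / 2) : ℝ) *
    Real.exp (-(1 / 2 * ((x - m) ⬝ᵥ C⁻¹.mulVec (x - m))))

/-- The Gaussian measure `N(m, C)` on `ℝ^d` (for `C` symmetric positive definite): the measure with
density `gaussianDensity m C` with respect to Lebesgue measure. -/
def gaussianMeasure {d : ℕ} (m : Fin d → ℝ) (C : Matrix (Fin d) (Fin d) ℝ) :
    Measure (Fin d → ℝ) :=
  volume.withDensity fun x => ENNReal.ofReal (gaussianDensity m C x)

/-- The smallest eigenvalue of a symmetric matrix (its real spectrum is the finite set of its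
eigenvalues, nonempty as soon as `0 < d`). -/
def lambdaMin {d : ℕ} (A : Matrix (Fin d) (Fin d) ℝ) : ℝ := sInf (spectrum ℝ A)

end

/-!
If `𝔼[e^{a|X|}]` is finite for some `a > 0` then, by Jensen's inequality, `log 𝔼[e^{tX}]` lies
between `t 𝔼[X]` and `(|t| / a) log 𝔼[e^{a|X|}]` for `|t| ≤ a`, hence is `O(t)`. For `X = H` under
`N(m, C)`, the growth condition reduces this to the exponential moment `𝔼[e^{b xᵀx}]` with
`b = a c₀`. When `C⁻¹ ≥ 2b + η`, the factor `e^{b xᵀx}` absorbs only part of the quadratic form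
`C⁻¹`: up to a constant depending on `mᵀm`, the tilted density is dominated by the original one
dilated about `m`, whose integral is a power of the dilation factor. If instead only the entries of
`C` are bounded, Gershgorin's theorem bounds the eigenvalues of `C` from above, hence those of `C⁻¹`
away from `0`, and `a` can be chosen small enough.
-/

section CumulantBounds

open ProbabilityTheory

variable {Ω : Type*} {mΩ : MeasurableSpace Ω} {μ : Measure Ω} {X : Ω → ℝ}
  {a t : ℝ}

theorem integrable_exp_mul_of_integrable_exp_mul_abs (hX : AEMeasurable X μ) (ht : |t| ≤ a)
    (hexp : Integrable (fun ω => Real.exp (a * |X ω|)) μ) :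
    Integrable (fun ω => Real.exp (t * X ω)) μ :=
  hexp.mono' (by fun_prop) <| ae_of_all _ fun ω => by
    rw [Real.norm_of_nonneg (Real.exp_pos _).le, Real.exp_le_exp]
    exact (le_abs_self _).trans (abs_mul t (X ω) ▸ by gcongr)

variable [IsProbabilityMeasure μ]

theorem mul_integral_le_cgf (hX : Integrable X μ)
    (hexp : Integrable (fun ω => Real.exp (t * X ω)) μ) : t * ∫ ω, X ω ∂μ ≤ cgf X μ t := by
  rw [cgf, Real.le_log_iff_exp_le (mgf_pos hexp), ← integral_const_mul]
  exact convexOn_exp.map_integral_le Real.continuousOn_exp isClosed_univ (by simp)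
    (hX.const_mul t) hexp

theorem cgf_mul_le_mul_cgf {s : ℝ} (hs : s ∈ Set.Icc 0 1)
    (hexp : Integrable (fun ω => Real.exp (t * X ω)) μ) : cgf X μ (s * t) ≤ s * cgf X μ t := by
  have hexp_rpow (ω) : Real.exp (s * t * X ω) = Real.exp (t * X ω) ^ s := by
    rw [← Real.exp_mul]
    ring_nf
  have hexp_mul : Integrable (fun ω => Real.exp (s * t * X ω)) μ := by
    simpa [mul_assoc] using integrable_exp_mul_of_le_of_le (X := fun ω => t * X ω)
      (by simp) (by simpa using hexp) hs.1 hs.2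
  rw [cgf, cgf, ← Real.log_rpow (mgf_pos hexp)]
  refine Real.log_le_log (mgf_pos hexp_mul) ?_
  simp only [mgf, hexp_rpow] at hexp_mul ⊢
  exact (Real.concaveOn_rpow hs.1 hs.2).le_map_integral
    (Real.continuous_rpow_const hs.1).continuousOn isClosed_Ici
    (ae_of_all _ fun ω => (Real.exp_pos _).le) hexp hexp_mul

theorem abs_cgf_le_mul_cgf_abs (hX : AEMeasurable X μ) (ha : 0 < a) (ht : |t| ≤ a)
    (hexp : Integrable (fun ω => Real.exp (a * |X ω|)) μ) :
    |cgf X μ t| ≤ |t| / a * cgf (fun ω => |X ω|) μ a := by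
  have hint : Integrable X μ :=
    integrable_of_mem_interior_integrableExpSet <| mem_interior.mpr
    ⟨Set.Ioo (-a) a, fun u hu => integrable_exp_mul_of_integrable_exp_mul_abs hX
      (abs_lt.mpr hu).le hexp, isOpen_Ioo, by simpa using ha⟩
  have hexp_t := integrable_exp_mul_of_integrable_exp_mul_abs hX ht hexp
  have hexp_abs : Integrable (fun ω => Real.exp (|t| * |X ω|)) μ :=
    integrable_exp_mul_of_integrable_exp_mul_abs hX.abs (by simpa using ht) (by simpa using hexp)
  refine abs_le.mpr ⟨?_, ?_⟩
  · calc -(|t| / a * cgf (fun ω => |X ω|) μ a)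
        ≤ -(|t| / a * (a * ∫ ω, |X ω| ∂μ)) := by gcongr; exact mul_integral_le_cgf hint.abs hexp
      _ = -(|t| * ∫ ω, |X ω| ∂μ) := by field_simp
      _ ≤ -|t * ∫ ω, X ω ∂μ| := by rw [abs_mul]; gcongr; exact abs_integral_le_integral_abs
      _ ≤ t * ∫ ω, X ω ∂μ := neg_abs_le _
      _ ≤ cgf X μ t := mul_integral_le_cgf hint hexp_t
  · calc cgf X μ t ≤ cgf (fun ω => |X ω|) μ |t| :=
          Real.log_le_log (mgf_pos hexp_t) <| integral_mono hexp_t hexp_abs fun ω =>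
            Real.exp_le_exp.mpr ((le_abs_self _).trans_eq (abs_mul _ _))
      _ = cgf (fun ω => |X ω|) μ (|t| / a * a) := by rw [div_mul_cancel₀ _ ha.ne']
      _ ≤ |t| / a * cgf (fun ω => |X ω|) μ a :=
          cgf_mul_le_mul_cgf ⟨by positivity, (div_le_one ha).mpr ht⟩ hexp

end CumulantBounds

section Spectrum

theorem lambdaMin_le_of_mem_spectrum {d : ℕ} {A : Matrix (Fin d) (Fin d) ℝ} {r : ℝ}
    (hr : r ∈ spectrum ℝ A) : lambdaMin A ≤ r :=
  csInf_le Matrix.finite_real_spectrum.bddBelow hr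

variable {ι : Type*} [Fintype ι] [DecidableEq ι]

open scoped MatrixOrder in
theorem mul_dotProduct_self_le_of_le_spectrum {A : Matrix ι ι ℝ} {κ : ℝ} (hA : A.IsHermitian)
    (hκ : ∀ r ∈ spectrum ℝ A, κ ≤ r) (x : ι → ℝ) : κ * (x ⬝ᵥ x) ≤ x ⬝ᵥ A.mulVec x := by
  have hle : (A - algebraMap ℝ _ κ).PosSemidef :=
    (algebraMap_le_iff_le_spectrum hA.isSelfAdjoint).mpr hκ
  simpa [Algebra.algebraMap_eq_smul_one, Matrix.sub_mulVec, Matrix.smul_mulVec]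
    using hle.dotProduct_mulVec_nonneg x

theorem norm_le_of_mem_spectrum_of_norm_entry_le {𝕜 : Type*} [NormedField 𝕜] {A : Matrix ι ι 𝕜}
    {M : ℝ} {r : 𝕜} (hA : ∀ i j, ‖A i j‖ ≤ M) (hr : r ∈ spectrum 𝕜 A) :
    ‖r‖ ≤ Fintype.card ι * M := by
  rw [← Matrix.spectrum_toLin', ← Module.End.hasEigenvalue_iff_mem_spectrum] at hr
  obtain ⟨k, hk⟩ := eigenvalue_mem_ball hr
  calc ‖r‖ ≤ ‖A k k‖ + ‖r - A k k‖ := norm_le_norm_add_norm_sub' r (A k k)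
    _ ≤ ‖A k k‖ + ∑ j ∈ Finset.univ.erase k, ‖A k j‖ := by
      gcongr
      exact mem_closedBall_iff_norm.mp hk
    _ = ∑ j, ‖A k j‖ := Finset.add_sum_erase _ (fun j => ‖A k j‖) (Finset.mem_univ k)
    _ ≤ Fintype.card ι * M := by
      simpa using Finset.sum_le_card_nsmul Finset.univ _ M fun j _ => hA k j

theorem inv_le_of_mem_spectrum_inv {A : Matrix ι ι ℝ} {L r : ℝ} (hA : A.PosDef)
    (hL : ∀ l ∈ spectrum ℝ A, l ≤ L) (hr : r ∈ spectrum ℝ A⁻¹) : L⁻¹ ≤ r := by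
  have hr_pos : 0 < r := by
    rw [hA.inv.isHermitian.spectrum_real_eq_range_eigenvalues] at hr
    obtain ⟨i, rfl⟩ := hr
    exact hA.inv.eigenvalues_pos i
  have hr_inv : r⁻¹ ∈ spectrum ℝ A := by
    rw [← hA.isUnit.unit_spec, spectrum.inv₀_mem_iff, Matrix.coe_units_inv]
    exact hr
  exact inv_le_of_inv_le₀ hr_pos (hL _ hr_inv)

end Spectrum

section GaussianIntegral

variable {ι : Type*} [Fintype ι]

theorem integral_exp_neg_mul_dotProduct_self (b : ℝ) :
    ∫ x : ι → ℝ, Real.exp (-b * (x ⬝ᵥ x)) = √(Real.pi / b) ^ Fintype.card ι := by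
  have hprod (x : ι → ℝ) : Real.exp (-b * (x ⬝ᵥ x)) = ∏ i, Real.exp (-b * x i ^ 2) := by
    simp only [← Real.exp_sum, ← Finset.mul_sum, dotProduct, pow_two]
  simp only [hprod]
  rw [integral_fintype_prod_volume_eq_pow (fun t : ℝ => Real.exp (-b * t ^ 2)), integral_gaussian]

variable [DecidableEq ι]

theorem integral_comp_mulVec {E : Type*} [NormedAddCommGroup E] [NormedSpace ℝ E]
    {S : Matrix ι ι ℝ} (hS : S.det ≠ 0) (f : (ι → ℝ) → E) :
    ∫ x, f (S.mulVec x) = |S.det⁻¹| • ∫ x, f x := by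
  have hemb : MeasurableEmbedding (Matrix.toLin' S) :=
    (LinearMap.isClosedEmbedding_of_injective <| LinearMap.ker_eq_bot.mpr <|
      Matrix.mulVec_injective_iff_isUnit.mpr <|
        (Matrix.isUnit_iff_isUnit_det S).mpr hS.isUnit).measurableEmbedding
  have hmap := hemb.integral_map (μ := volume) f
  rw [Real.map_matrix_volume_pi_eq_smul_volume_pi hS, integral_smul_measure,
    ENNReal.toReal_ofReal (abs_nonneg _)] at hmap
  exact hmap.symm

open scoped MatrixOrder in
theorem integral_exp_neg_half_dotProduct_mulVec {A : Matrix ι ι ℝ} (hA : A.PosDef) :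
    ∫ x : ι → ℝ, Real.exp (-(1 / 2 * (x ⬝ᵥ A.mulVec x))) =
      A.det ^ (-(1 / 2) : ℝ) * (2 * Real.pi) ^ ((Fintype.card ι : ℝ) / 2) := by
  obtain ⟨S, hS⟩ := CStarAlgebra.nonneg_iff_eq_star_mul_self.mp hA.posSemidef.nonneg
  have hdet : A.det = S.det ^ 2 := by simp [hS, Matrix.star_eq_conjTranspose, pow_two]
  have hS_det : S.det ≠ 0 := by
    rw [← sq_pos_iff, ← hdet]
    exact hA.det_pos
  have hquad (x : ι → ℝ) : -(1 / 2 * (x ⬝ᵥ A.mulVec x)) =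
      -(1 / 2) * (S.mulVec x ⬝ᵥ S.mulVec x) := by
    rw [hS, Matrix.star_eq_conjTranspose, Matrix.conjTranspose_eq_transpose_of_trivial,
      ← Matrix.mulVec_mulVec, Matrix.dotProduct_mulVec, Matrix.vecMul_transpose, neg_mul]
  have hdet_rpow : A.det ^ (-(1 / 2) : ℝ) = |S.det⁻¹| := by
    rw [hdet, Real.rpow_neg (sq_nonneg _), ← Real.sqrt_eq_rpow, Real.sqrt_sq_eq_abs, abs_inv]
  have hpi_rpow : √(Real.pi / (1 / 2)) ^ Fintype.card ι =
      (2 * Real.pi) ^ ((Fintype.card ι : ℝ) / 2) := by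
    rw [Real.sqrt_eq_rpow, ← Real.rpow_mul_natCast (by positivity)]
    ring_nf
  simp only [hquad]
  rw [integral_comp_mulVec hS_det fun y => Real.exp (-(1 / 2) * (y ⬝ᵥ y)),
    integral_exp_neg_mul_dotProduct_self, hdet_rpow, hpi_rpow, smul_eq_mul]

end GaussianIntegral

theorem dotProduct_add_self_le {ι : Type*} [Fintype ι] {θ : ℝ} (hθ : 0 < θ) (x y : ι → ℝ) :
    (x + y) ⬝ᵥ (x + y) ≤ (1 + θ) * (x ⬝ᵥ x) + (1 + θ⁻¹) * (y ⬝ᵥ y) := by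
  simp only [dotProduct, Finset.mul_sum, ← Finset.sum_add_distrib]
  refine Finset.sum_le_sum fun i _ => ?_
  have hyoung : θ * (x i - θ⁻¹ * y i) ^ 2 = θ * x i ^ 2 + θ⁻¹ * y i ^ 2 - 2 * (x i * y i) := by
    field_simp
    ring
  have : 0 ≤ θ * (x i - θ⁻¹ * y i) ^ 2 := by positivity
  simp only [Pi.add_apply]
  linarith

theorem neg_half_mul_add_mul_dotProduct_add_self_le {ι : Type*} [Fintype ι] {b η q : ℝ}
    (hb : 0 < b) (hη : 0 < η) {x m : ι → ℝ} (hq : (2 * b + η) * (x ⬝ᵥ x) ≤ q) :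
    -(1 / 2 * q) + b * ((x + m) ⬝ᵥ (x + m)) ≤
      (b + 4 * b ^ 2 / η) * (m ⬝ᵥ m) + -(1 / 2 * ((2 + 4 * b / η)⁻¹ * q)) := by
  set ρ := (2 + 4 * b / η)⁻¹ with hρ_def
  have hρ_one : 0 ≤ 1 - ρ := by
    refine sub_nonneg.mpr (inv_le_one_of_one_le₀ ?_)
    linarith [show 0 < 4 * b / η by positivity]
  have hρ_mul : (1 - ρ) * (2 * b + η) = 2 * (b + η / 4) := by
    rw [hρ_def]
    field_simp
    ring
  have hshift : (x + m) ⬝ᵥ (x + m) ≤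
      (1 + η / (4 * b)) * (x ⬝ᵥ x) + (1 + 4 * b / η) * (m ⬝ᵥ m) := by
    simpa only [inv_div] using dotProduct_add_self_le (by positivity : 0 < η / (4 * b)) x m
  calc -(1 / 2 * q) + b * ((x + m) ⬝ᵥ (x + m))
      ≤ -(1 / 2 * q) +
        b * ((1 + η / (4 * b)) * (x ⬝ᵥ x) + (1 + 4 * b / η) * (m ⬝ᵥ m)) := by gcongr
    _ = -(1 / 2 * q) + 1 / 2 * ((1 - ρ) * ((2 * b + η) * (x ⬝ᵥ x))) +
        (b + 4 * b ^ 2 / η) * (m ⬝ᵥ m) := by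
      rw [← mul_assoc (1 - ρ), hρ_mul]
      field_simp
      ring
    _ ≤ -(1 / 2 * q) + 1 / 2 * ((1 - ρ) * q) + (b + 4 * b ^ 2 / η) * (m ⬝ᵥ m) := by gcongr
    _ = (b + 4 * b ^ 2 / η) * (m ⬝ᵥ m) + -(1 / 2 * (ρ * q)) := by ring

section GaussianMeasure

open ProbabilityTheory

theorem measurable_gaussianDensity {d : ℕ} (m : Fin d → ℝ) (C : Matrix (Fin d) (Fin d) ℝ) :
    Measurable (gaussianDensity m C) := by
  unfold gaussianDensity
  fun_prop

variable {d : ℕ} {C : Matrix (Fin d) (Fin d) ℝ} (m : Fin d → ℝ)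

theorem gaussianDensity_nonneg (hC : C.PosDef) (x : Fin d → ℝ) : 0 ≤ gaussianDensity m C x := by
  have := hC.det_pos
  unfold gaussianDensity
  positivity

theorem integral_gaussianDensity (hC : C.PosDef) : ∫ x, gaussianDensity m C x = 1 := by
  have hdet := hC.det_pos
  unfold gaussianDensity
  rw [integral_const_mul,
    integral_sub_right_eq_self (fun y => Real.exp (-(1 / 2 * (y ⬝ᵥ C⁻¹.mulVec y)))) m,
    integral_exp_neg_half_dotProduct_mulVec hC.inv, Matrix.det_nonsing_inv, Ring.inverse_eq_inv',
    Real.inv_rpow hdet.le, Fintype.card_fin, neg_div,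
    Real.rpow_neg (by positivity : (0 : ℝ) ≤ 2 * Real.pi)]
  field_simp

theorem integrable_gaussianDensity (hC : C.PosDef) : Integrable (gaussianDensity m C) :=
  .of_integral_ne_zero <| by simp [integral_gaussianDensity m hC]

theorem isProbabilityMeasure_gaussianMeasure (hC : C.PosDef) :
    IsProbabilityMeasure (gaussianMeasure m C) := by
  refine ⟨?_⟩
  rw [gaussianMeasure, withDensity_apply _ MeasurableSet.univ, Measure.restrict_univ,
    ← ofReal_integral_eq_lintegral_ofReal (integrable_gaussianDensity m hC)
    (ae_of_all _ (gaussianDensity_nonneg m hC)), integral_gaussianDensity m hC, ENNReal.ofReal_one]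

theorem integrable_gaussianMeasure_iff (hC : C.PosDef) {f : (Fin d → ℝ) → ℝ} :
    Integrable f (gaussianMeasure m C) ↔ Integrable fun x => gaussianDensity m C x * f x := by
  rw [gaussianMeasure, integrable_withDensity_iff_integrable_smul'
    (measurable_gaussianDensity m C).ennreal_ofReal (by simp)]
  simp only [ENNReal.toReal_ofReal (gaussianDensity_nonneg m hC _), smul_eq_mul]

theorem integral_gaussianMeasure (hC : C.PosDef) (f : (Fin d → ℝ) → ℝ) :
    ∫ x, f x ∂gaussianMeasure m C = ∫ x, gaussianDensity m C x * f x := by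
  rw [gaussianMeasure, integral_withDensity_eq_integral_toReal_smul
    (measurable_gaussianDensity m C).ennreal_ofReal (by simp)]
  simp only [ENNReal.toReal_ofReal (gaussianDensity_nonneg m hC _), smul_eq_mul]

theorem integrable_gaussianDensity_homothety (hC : C.PosDef) {s : ℝ} (hs : s ≠ 0) :
    Integrable fun x => gaussianDensity m C (AffineMap.homothety m s x) := by
  simp only [AffineMap.homothety_apply, vsub_eq_sub, vadd_eq_add]
  exact (((integrable_gaussianDensity m hC).comp_add_right m).comp_smul hs).comp_sub_right m

theorem integral_gaussianDensity_homothety (hC : C.PosDef) {s : ℝ} (hs : 0 ≤ s) :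
    ∫ x, gaussianDensity m C (AffineMap.homothety m s x) = (s ^ d)⁻¹ := by
  simp only [AffineMap.homothety_apply, vsub_eq_sub, vadd_eq_add]
  rw [integral_sub_right_eq_self (fun y => gaussianDensity m C (s • y + m)),
    Measure.integral_comp_smul volume (fun y => gaussianDensity m C (y + m)),
    integral_add_right_eq_self, integral_gaussianDensity m hC, Module.finrank_fin_fun,
    abs_of_nonneg (by positivity), smul_eq_mul, mul_one]

variable {b η : ℝ} (hb : 0 < b) (hη : 0 < η) (hC : C.PosDef)
  (hspec : ∀ r ∈ spectrum ℝ C⁻¹, 2 * b + η ≤ r)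
include hb hη hC hspec

-- The bound is a rescaled copy of the same density, so `det C` never has to be estimated.
theorem gaussianDensity_mul_exp_le (x : Fin d → ℝ) :
    gaussianDensity m C x * Real.exp (b * (x ⬝ᵥ x)) ≤
      Real.exp ((b + 4 * b ^ 2 / η) * (m ⬝ᵥ m)) *
        gaussianDensity m C (AffineMap.homothety m √(2 + 4 * b / η)⁻¹ x) := by
  have := hC.det_pos
  obtain ⟨y, rfl⟩ : ∃ y, x = y + m := ⟨x - m, by simp⟩
  have hexp := neg_half_mul_add_mul_dotProduct_add_self_le hb hη (m := m)
    (mul_dotProduct_self_le_of_le_spectrum hC.inv.isHermitian hspec y)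
  set ρ := (2 + 4 * b / η)⁻¹
  have hρ : 0 ≤ ρ := by positivity
  have hhom : AffineMap.homothety m √ρ (y + m) - m = √ρ • y := by
    simp [AffineMap.homothety_apply]
  have hscale : (√ρ • y) ⬝ᵥ C⁻¹.mulVec (√ρ • y) = ρ * (y ⬝ᵥ C⁻¹.mulVec y) := by
    rw [Matrix.mulVec_smul, smul_dotProduct, dotProduct_smul, smul_eq_mul, smul_eq_mul,
      ← mul_assoc, Real.mul_self_sqrt hρ]
  simp only [gaussianDensity, hhom, add_sub_cancel_right, hscale]
  rw [mul_assoc, mul_left_comm (Real.exp _), ← Real.exp_add, ← Real.exp_add]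
  gcongr

theorem integrable_gaussianDensity_mul_exp :
    Integrable fun x => gaussianDensity m C x * Real.exp (b * (x ⬝ᵥ x)) :=
  ((integrable_gaussianDensity_homothety m hC
    (by positivity : √(2 + 4 * b / η)⁻¹ ≠ 0)).const_mul _).mono'
    ((measurable_gaussianDensity m C).mul (by fun_prop)).aestronglyMeasurable <|
    ae_of_all _ fun x => by
      rw [Real.norm_of_nonneg (mul_nonneg (gaussianDensity_nonneg m hC x) (Real.exp_nonneg _))]
      exact gaussianDensity_mul_exp_le m hb hη hC hspec x

theorem integrable_exp_mul_dotProduct_self_gaussianMeasure :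
    Integrable (fun x => Real.exp (b * (x ⬝ᵥ x))) (gaussianMeasure m C) :=
  (integrable_gaussianMeasure_iff m hC).mpr
    (integrable_gaussianDensity_mul_exp m hb hη hC hspec)

theorem cgf_dotProduct_self_gaussianMeasure_le :
    cgf (fun x => x ⬝ᵥ x) (gaussianMeasure m C) b ≤
      (b + 4 * b ^ 2 / η) * (m ⬝ᵥ m) + d / 2 * Real.log (2 + 4 * b / η) := by
  have := isProbabilityMeasure_gaussianMeasure m hC
  have hint := integrable_exp_mul_dotProduct_self_gaussianMeasure m hb hη hC hspec
  have hρ : 0 < 2 + 4 * b / η := by positivity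
  rw [cgf, Real.log_le_iff_le_exp (mgf_pos hint)]
  calc ∫ x, Real.exp (b * (x ⬝ᵥ x)) ∂gaussianMeasure m C
      = ∫ x, gaussianDensity m C x * Real.exp (b * (x ⬝ᵥ x)) := integral_gaussianMeasure m hC _
    _ ≤ ∫ x, Real.exp ((b + 4 * b ^ 2 / η) * (m ⬝ᵥ m)) *
          gaussianDensity m C (AffineMap.homothety m √(2 + 4 * b / η)⁻¹ x) :=
        integral_mono (integrable_gaussianDensity_mul_exp m hb hη hC hspec)
          ((integrable_gaussianDensity_homothety m hC (by positivity)).const_mul _)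
          (gaussianDensity_mul_exp_le m hb hη hC hspec)
    _ = Real.exp ((b + 4 * b ^ 2 / η) * (m ⬝ᵥ m)) * √(2 + 4 * b / η) ^ d := by
        rw [integral_const_mul, integral_gaussianDensity_homothety m hC (by positivity),
          Real.sqrt_inv, inv_pow, inv_inv]
    _ = Real.exp ((b + 4 * b ^ 2 / η) * (m ⬝ᵥ m) + d / 2 * Real.log (2 + 4 * b / η)) := by
        rw [Real.exp_add, Real.sqrt_eq_rpow, ← Real.rpow_mul_natCast hρ.le, Real.rpow_def_of_pos hρ]
        ring_nf

end GaussianMeasure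

section LogNormalization

open ProbabilityTheory

/-- The slope of the linear bound on `|log 𝔼[e^{-εH}]|` over `ε ∈ [0, a]`, when
`|H x| ≤ c₀ xᵀx + c₁`, the spectrum of `C⁻¹` lies above `2 a c₀ + η`, and `mᵀm ≤ q`. -/
noncomputable def logNormalizationSlope (d : ℕ) (c₀ c₁ a η q : ℝ) : ℝ :=
  c₁ + (c₀ + 4 * a * c₀ ^ 2 / η) * q + d / (2 * a) * Real.log (2 + 4 * (a * c₀) / η)

variable {d : ℕ} {c₀ c₁ a η q : ℝ}

theorem logNormalizationSlope_pos (hc₀ : 0 < c₀) (hc₁ : 0 < c₁) (ha : 0 < a) (hη : 0 < η)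
    (hq : 0 ≤ q) : 0 < logNormalizationSlope d c₀ c₁ a η q := by
  have hlog : 0 ≤ Real.log (2 + 4 * (a * c₀) / η) := Real.log_nonneg <| by
    linarith [show 0 < 4 * (a * c₀) / η by positivity]
  unfold logNormalizationSlope
  positivity

variable {m : Fin d → ℝ} {C : Matrix (Fin d) (Fin d) ℝ} {H : (Fin d → ℝ) → ℝ}
  (hc₀ : 0 < c₀) (ha : 0 < a) (hη : 0 < η) (hC : C.PosDef)
  (hspec : ∀ r ∈ spectrum ℝ C⁻¹, 2 * a * c₀ + η ≤ r)
  (hH : Measurable H) (hHle : ∀ x, |H x| ≤ c₀ * (x ⬝ᵥ x) + c₁)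
include hc₀ ha hη hC hspec hH hHle

theorem integrable_exp_mul_abs_and_cgf_abs_le (hm : m ⬝ᵥ m ≤ q) :
    Integrable (fun x => Real.exp (a * |H x|)) (gaussianMeasure m C) ∧
      cgf (fun x => |H x|) (gaussianMeasure m C) a ≤ a * logNormalizationSlope d c₀ c₁ a η q := by
  have := isProbabilityMeasure_gaussianMeasure m hC
  have hac₀ : 0 < a * c₀ := mul_pos ha hc₀
  rw [mul_assoc] at hspec
  have hint := integrable_exp_mul_dotProduct_self_gaussianMeasure m hac₀ hη hC hspec
  have hle (x) : Real.exp (a * |H x|) ≤ Real.exp (a * c₁) * Real.exp (a * c₀ * (x ⬝ᵥ x)) := by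
    rw [← Real.exp_add, Real.exp_le_exp]
    nlinarith [hHle x]
  have hint_abs : Integrable (fun x => Real.exp (a * |H x|)) (gaussianMeasure m C) :=
    (hint.const_mul _).mono' (by fun_prop) <| ae_of_all _ fun x => by
      rw [Real.norm_of_nonneg (Real.exp_pos _).le]
      exact hle x
  refine ⟨hint_abs, ?_⟩
  calc cgf (fun x => |H x|) (gaussianMeasure m C) a
      ≤ Real.log (∫ x, Real.exp (a * c₁) * Real.exp (a * c₀ * (x ⬝ᵥ x)) ∂gaussianMeasure m C) :=
        Real.log_le_log (mgf_pos hint_abs) (integral_mono hint_abs (hint.const_mul _) hle)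
    _ = a * c₁ + cgf (fun x => x ⬝ᵥ x) (gaussianMeasure m C) (a * c₀) := by
        rw [integral_const_mul, ← mgf, Real.log_mul (Real.exp_ne_zero _) (mgf_pos hint).ne',
          Real.log_exp, ← cgf]
    _ ≤ a * c₁ + ((a * c₀ + 4 * (a * c₀) ^ 2 / η) * (m ⬝ᵥ m) +
          d / 2 * Real.log (2 + 4 * (a * c₀) / η)) := by
        gcongr
        exact cgf_dotProduct_self_gaussianMeasure_le m hac₀ hη hC hspec
    _ ≤ a * c₁ + ((a * c₀ + 4 * (a * c₀) ^ 2 / η) * q +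
          d / 2 * Real.log (2 + 4 * (a * c₀) / η)) := by gcongr
    _ = a * logNormalizationSlope d c₀ c₁ a η q := by
        unfold logNormalizationSlope
        field_simp
        ring

theorem log_normalization_bounds (hm : m ⬝ᵥ m ≤ q) {ε : ℝ} (hε : ε ∈ Set.Icc 0 a) :
    Integrable (fun x => Real.exp (-(ε * H x))) (gaussianMeasure m C) ∧
      0 < ∫ x, Real.exp (-(ε * H x)) ∂gaussianMeasure m C ∧
      |Real.log (∫ x, Real.exp (-(ε * H x)) ∂gaussianMeasure m C)| ≤
        logNormalizationSlope d c₀ c₁ a η q * ε := by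
  have := isProbabilityMeasure_gaussianMeasure m hC
  obtain ⟨hint, hcgf⟩ := integrable_exp_mul_abs_and_cgf_abs_le hc₀ ha hη hC hspec hH hHle hm
  have hε_abs : |(-ε)| = ε := by rw [abs_neg, abs_of_nonneg hε.1]
  have hε_le : |(-ε)| ≤ a := hε_abs.trans_le hε.2
  have hint_ε := integrable_exp_mul_of_integrable_exp_mul_abs hH.aemeasurable hε_le hint
  simp only [← neg_mul]
  refine ⟨hint_ε, mgf_pos hint_ε, ?_⟩
  calc |cgf H (gaussianMeasure m C) (-ε)|
      ≤ |(-ε)| / a * cgf (fun x => |H x|) (gaussianMeasure m C) a :=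
        abs_cgf_le_mul_cgf_abs hH.aemeasurable ha hε_le hint
    _ ≤ |(-ε)| / a * (a * logNormalizationSlope d c₀ c₁ a η q) := by gcongr
    _ = logNormalizationSlope d c₀ c₁ a η q * ε := by rw [hε_abs]; field_simp

end LogNormalization

theorem dotProduct_self_le_card_mul_sq {ι : Type*} [Fintype ι] {M : ℝ} {m : ι → ℝ}
    (hm : ∀ i, |m i| ≤ M) : m ⬝ᵥ m ≤ Fintype.card ι * M ^ 2 := by
  simpa [dotProduct, ← pow_two] using Finset.sum_le_card_nsmul Finset.univ (fun i => m i ^ 2) _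
    fun i _ => sq_le_sq.mpr ((hm i).trans (le_abs_self M))

theorem perturbed_gaussian_log_normalization_general (d : ℕ) (c₀ c₁ M : ℝ)
    (hc₀ : 0 < c₀) (hc₁ : 0 < c₁) (hM : 0 < M) :
    (∀ εbar : ℝ, 0 < εbar → ∀ η : ℝ, 0 < η →
      ∃ K : ℝ, 0 < K ∧
        ∀ m : Fin d → ℝ, (∀ i, |m i| ≤ M) →
        ∀ C : Matrix (Fin d) (Fin d) ℝ, C.PosDef → 2 * εbar * c₀ + η ≤ lambdaMin C⁻¹ →
        ∀ H : (Fin d → ℝ) → ℝ, Measurable H → (∀ x, |H x| ≤ c₀ * (x ⬝ᵥ x) + c₁) →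
        ∀ ε ∈ Set.Icc 0 εbar,
          Integrable (fun x => Real.exp (-(ε * H x))) (gaussianMeasure m C) ∧
          0 < ∫ x, Real.exp (-(ε * H x)) ∂gaussianMeasure m C ∧
          |Real.log (∫ x, Real.exp (-(ε * H x)) ∂gaussianMeasure m C)| ≤ K * ε) ∧
    (∃ ε₀ : ℝ, 0 < ε₀ ∧ ∃ K : ℝ, 0 < K ∧
        ∀ m : Fin d → ℝ, (∀ i, |m i| ≤ M) →
        ∀ C : Matrix (Fin d) (Fin d) ℝ, C.PosDef → (∀ i j, |C i j| ≤ M) →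
        ∀ H : (Fin d → ℝ) → ℝ, Measurable H → (∀ x, |H x| ≤ c₀ * (x ⬝ᵥ x) + c₁) →
        ∀ ε ∈ Set.Icc 0 ε₀,
          Integrable (fun x => Real.exp (-(ε * H x))) (gaussianMeasure m C) ∧
          0 < ∫ x, Real.exp (-(ε * H x)) ∂gaussianMeasure m C ∧
          |Real.log (∫ x, Real.exp (-(ε * H x)) ∂gaussianMeasure m C)| ≤ K * ε) := by
  have hmean {m : Fin d → ℝ} (hm : ∀ i, |m i| ≤ M) : m ⬝ᵥ m ≤ d * M ^ 2 := by
    simpa using dotProduct_self_le_card_mul_sq hm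
  refine ⟨fun εbar hεbar η hη => ?_, ?_⟩
  · refine ⟨_, logNormalizationSlope_pos (d := d) hc₀ hc₁ hεbar hη (by positivity : 0 ≤ d * M ^ 2),
      fun m hm C hC hmin H hH hHle ε hε => ?_⟩
    exact log_normalization_bounds hc₀ hεbar hη hC
      (fun r hr => hmin.trans (lambdaMin_le_of_mem_spectrum hr)) hH hHle (hmean hm) hε
  · -- The entry bound gives `d * M`; `d + 1` keeps `κ` positive when `d = 0`.
    set κ := ((d + 1) * M)⁻¹
    have hκ_pos : 0 < κ := by positivity
    have hε₀_pos : 0 < κ / (4 * c₀) := by positivity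
    refine ⟨κ / (4 * c₀), hε₀_pos, _,
      logNormalizationSlope_pos (d := d) hc₀ hc₁ hε₀_pos (half_pos hκ_pos)
        (by positivity : 0 ≤ d * M ^ 2),
      fun m hm C hC hCM H hH hHle ε hε => ?_⟩
    refine log_normalization_bounds hc₀ hε₀_pos (half_pos hκ_pos) hC (fun r hr => ?_) hH hHle
      (hmean hm) hε
    calc 2 * (κ / (4 * c₀)) * c₀ + κ / 2 = κ := by field_simp; ring
      _ ≤ r := inv_le_of_mem_spectrum_inv hC (fun l hl => ?_) hr
    calc l ≤ d * M := by
          simpa using (le_abs_self l).trans (norm_le_of_mem_spectrum_of_norm_entry_le hCM hl)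
      _ ≤ (d + 1) * M := by gcongr; linarith

/-- Let `d ∈ ℕ` and `c₀, c₁, M > 0`. Below, `m` ranges over the vectors with entries bounded by `M`,
`C` over the symmetric positive definite matrices with entries of `C` and `C⁻¹` bounded by `M`, and
`H` over the measurable functions with `|H x| ≤ c₀ xᵀx + c₁`.

1. For all `ε̄, η > 0` there is `K > 0`, depending only on `d, c₀, c₁, M, ε̄, η`, such that if
`λ_min(C⁻¹) ≥ 2 ε̄ c₀ + η` then, for all `ε ∈ [0, ε̄]`, `𝔼[e^{-εH}]` is finite and positive and
`|log 𝔼[e^{-εH}]| ≤ K ε`. (Every `C` with `λ_min(C⁻¹) > 2 ε̄ c₀` is covered, by some `η > 0`.)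

2. There are `ε₀, K > 0`, depending only on `d, c₀, c₁, M`, such that the same holds for all
`ε ∈ [0, ε₀]`, without any further condition on `C`. -/
theorem perturbed_gaussian_log_normalization (d : ℕ) (c₀ c₁ M : ℝ)
    (hc₀ : 0 < c₀) (hc₁ : 0 < c₁) (hM : 0 < M) :
    (∀ εbar : ℝ, 0 < εbar → ∀ η : ℝ, 0 < η →
      ∃ K : ℝ, 0 < K ∧
        ∀ m : Fin d → ℝ, (∀ i, |m i| ≤ M) →
        ∀ C : Matrix (Fin d) (Fin d) ℝ, C.PosDef →
          (∀ i j, |C i j| ≤ M) → (∀ i j, |C⁻¹ i j| ≤ M) →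
          2 * εbar * c₀ + η ≤ lambdaMin C⁻¹ →
        ∀ H : (Fin d → ℝ) → ℝ, Measurable H → (∀ x, |H x| ≤ c₀ * (x ⬝ᵥ x) + c₁) →
        ∀ ε ∈ Set.Icc 0 εbar,
          Integrable (fun x => Real.exp (-(ε * H x))) (gaussianMeasure m C) ∧
          0 < ∫ x, Real.exp (-(ε * H x)) ∂gaussianMeasure m C ∧
          |Real.log (∫ x, Real.exp (-(ε * H x)) ∂gaussianMeasure m C)| ≤ K * ε) ∧
    (∃ ε₀ : ℝ, 0 < ε₀ ∧ ∃ K : ℝ, 0 < K ∧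
        ∀ m : Fin d → ℝ, (∀ i, |m i| ≤ M) →
        ∀ C : Matrix (Fin d) (Fin d) ℝ, C.PosDef →
          (∀ i j, |C i j| ≤ M) → (∀ i j, |C⁻¹ i j| ≤ M) →
        ∀ H : (Fin d → ℝ) → ℝ, Measurable H → (∀ x, |H x| ≤ c₀ * (x ⬝ᵥ x) + c₁) →
        ∀ ε ∈ Set.Icc 0 ε₀,
          Integrable (fun x => Real.exp (-(ε * H x))) (gaussianMeasure m C) ∧
          0 < ∫ x, Real.exp (-(ε * H x)) ∂gaussianMeasure m C ∧
          |Real.log (∫ x, Real.exp (-(ε * H x)) ∂gaussianMeasure m C)| ≤ K * ε) := by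
  obtain ⟨h₁, ε₀, hε₀, K, hK, h₂⟩ :=
    perturbed_gaussian_log_normalization_general d c₀ c₁ M hc₀ hc₁ hM
  exact ⟨fun εbar hεbar η hη => (h₁ εbar hεbar η hη).imp fun K ⟨hK, h⟩ =>
    ⟨hK, fun m hm C hC _ _ => h m hm C hC⟩, ε₀, hε₀, K, hK, fun m hm C hC hCM _ => h₂ m hm C hC hCM⟩
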